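/- arXiv:2103.08631 — 3 statements merged into one kernel-verified Lean document; each statement's English description precedes it below -/
import Mathlib

section
/- Let X, Y, Z denote the 2×2 Pauli matrices, I the 2×2 identity, and ⊗ the Kronecker product. Set A₁ = I⊗X⊗Z⊗Z⊗X, A₂ = I⊗Y⊗X⊗X⊗Y, A₃ = I⊗Z⊗Y⊗Y⊗Z, B = I⊗I⊗Y⊗Z⊗Y, and for i ∈ {1,…,5} let Z_i be the 5-fold Kronecker product with Z in the i-th factor and I elsewhere. Then: (a) for each i ∈ {2,3,4,5}, at least one of A₁, A₂, A₃ anticommutes with Z_i; (b) for every pair 2 ≤ i < j ≤ 5 with (i,j) ∉ {(2,5),(3,4)}, at least one of A₁, A₂, A₃ anticommutes with Z_i·Z_j; and (c) B anticommutes with Z₂·Z₅ and with Z₃·Z₄. -/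
open Matrix

noncomputable section

/-- Pauli X. -/
def pX : Matrix (Fin 2) (Fin 2) ℂ := !![0, 1; 1, 0]
/-- Pauli Y. -/
def pY : Matrix (Fin 2) (Fin 2) ℂ := !![0, -Complex.I; Complex.I, 0]
/-- Pauli Z. -/
def pZ : Matrix (Fin 2) (Fin 2) ℂ := !![1, 0; 0, -1]

/-- The 5-fold tensor (Kronecker) product `P₁ ⊗ P₂ ⊗ P₃ ⊗ P₄ ⊗ P₅`, realized as a
`32 × 32` matrix on `(ℂ²)^⊗5` with index set `Fin 5 → Fin 2`. -/
def tp5 (P : Fin 5 → Matrix (Fin 2) (Fin 2) ℂ) :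
    Matrix (Fin 5 → Fin 2) (Fin 5 → Fin 2) ℂ :=
  fun x y => ∏ i, P i (x i) (y i)

def A1 : Matrix (Fin 5 → Fin 2) (Fin 5 → Fin 2) ℂ := tp5 ![1, pX, pZ, pZ, pX]
def A2 : Matrix (Fin 5 → Fin 2) (Fin 5 → Fin 2) ℂ := tp5 ![1, pY, pX, pX, pY]
def A3 : Matrix (Fin 5 → Fin 2) (Fin 5 → Fin 2) ℂ := tp5 ![1, pZ, pY, pY, pZ]
def B : Matrix (Fin 5 → Fin 2) (Fin 5 → Fin 2) ℂ := tp5 ![1, 1, pY, pZ, pY]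

/-- Pauli `Z` acting on the `i`-th qubit (0-indexed; the paper's `Z_{i+1}`) and the
identity elsewhere. -/
def Zon (i : Fin 5) : Matrix (Fin 5 → Fin 2) (Fin 5 → Fin 2) ℂ :=
  tp5 (fun j => if j = i then pZ else 1)

/-!
A tensor product of Pauli matrices commutes or anticommutes with a single-site `Z` according to its
factor at that site: `X` and `Y` anticommute with `Z`, while `1` and `Z` commute with it. Hence `A2`
anticommutes with `Zon i` for every `i ≠ 0`, and `A1` anticommutes with `Zon 1`, `Zon 4` but
commutes with `Zon 2`, `Zon 3`. Signs multiply, so among the products `Zon i * Zon j` with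
`0 < i < j`, `A1` anticommutes with exactly those having one site in `{1, 4}` and the other in
`{2, 3}`. On the two remaining pairs its signs cancel, and there `B` anticommutes with exactly one
of the two factors.
-/

section Anticommute

/-- Two elements anticommute if exchanging them in a product changes its sign; this is the relation
between a stabilizer and a Pauli error that it detects. -/
def Anticommute {S : Type*} [Mul S] [Neg S] (a x : S) : Prop :=
  a * x = -(x * a)

theorem anticommute_iff_semiconjBy_neg {S : Type*} [Mul S] [HasDistribNeg S] {a x : S} :
    Anticommute a x ↔ SemiconjBy a x (-x) := by
  rw [Anticommute, SemiconjBy, neg_mul]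

variable {S : Type*} [Semigroup S] [HasDistribNeg S] {a x y : S}

theorem Anticommute.mul_commute (hx : Anticommute a x) (hy : Commute a y) :
    Anticommute a (x * y) := by
  rw [anticommute_iff_semiconjBy_neg] at hx ⊢
  simpa only [neg_mul] using hx.mul_right hy

theorem Anticommute.commute_mul (hy : Anticommute a y) (hx : Commute a x) :
    Anticommute a (x * y) := by
  rw [anticommute_iff_semiconjBy_neg] at hy ⊢
  simpa only [mul_neg] using SemiconjBy.mul_right hx hy

end Anticommute

section PiKronecker

variable {ι R : Type*} [Fintype ι] {l m n : ι → Type*}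

/-- The tensor (Kronecker) product `⨂ i, P i` of a finite family of matrices, with rows and columns
indexed by the product types; `tp5` is the case of five `2 × 2` complex matrices. -/
def piKronecker [CommMonoid R] (P : ∀ i, Matrix (m i) (n i) R) :
    Matrix (∀ i, m i) (∀ i, n i) R :=
  fun x y => ∏ i, P i (x i) (y i)

variable [DecidableEq ι]

theorem piKronecker_update_neg [CommMonoid R] [HasDistribNeg R]
    (P : ∀ i, Matrix (m i) (n i) R) (i : ι) (M : Matrix (m i) (n i) R) :
    piKronecker (Function.update P i (-M)) = -piKronecker (Function.update P i M) := by
  ext x y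
  have prod_off_site (N : Matrix (m i) (n i) R) :
      ∏ j ∈ {i}ᶜ, Function.update P i N j (x j) (y j) = ∏ j ∈ {i}ᶜ, P j (x j) (y j) :=
    Finset.prod_congr rfl fun j hj => by
      rw [Function.update_of_ne (by simpa using hj)]
  simp only [piKronecker, Matrix.neg_apply, Fintype.prod_eq_mul_prod_compl i, prod_off_site,
    Function.update_self, neg_mul]

theorem piKronecker_mul_piKronecker [CommSemiring R] [∀ i, Fintype (m i)]
    (P : ∀ i, Matrix (l i) (m i) R) (Q : ∀ i, Matrix (m i) (n i) R) :
    piKronecker P * piKronecker Q = piKronecker fun i => P i * Q i := by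
  ext x y
  simp only [piKronecker, Matrix.mul_apply, ← Finset.prod_mul_distrib]
  rw [Finset.prod_univ_sum, Fintype.piFinset_univ]

variable [∀ i, Fintype (m i)]

theorem semiconjBy_piKronecker [CommSemiring R] {P Q Q' : ∀ i, Matrix (m i) (m i) R}
    (h : ∀ i, SemiconjBy (P i) (Q i) (Q' i)) :
    SemiconjBy (piKronecker P) (piKronecker Q) (piKronecker Q') := by
  rw [SemiconjBy, piKronecker_mul_piKronecker, piKronecker_mul_piKronecker]
  exact congrArg piKronecker (funext h)

variable [∀ i, DecidableEq (m i)] {i : ι}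

theorem semiconjBy_piKronecker_mulSingle [CommSemiring R] {P : ∀ i, Matrix (m i) (m i) R}
    {M N : Matrix (m i) (m i) R} (h : SemiconjBy (P i) M N) :
    SemiconjBy (piKronecker P) (piKronecker (Pi.mulSingle i M))
      (piKronecker (Pi.mulSingle i N)) := by
  refine semiconjBy_piKronecker fun j => ?_
  obtain rfl | hj := eq_or_ne j i
  · simpa only [Pi.mulSingle_eq_same] using h
  · simpa only [Pi.mulSingle_eq_of_ne hj] using SemiconjBy.one_right (P j)

theorem anticommute_piKronecker_mulSingle [CommRing R] {P : ∀ i, Matrix (m i) (m i) R}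
    {M : Matrix (m i) (m i) R} (h : Anticommute (P i) M) :
    Anticommute (piKronecker P) (piKronecker (Pi.mulSingle i M)) := by
  rw [anticommute_iff_semiconjBy_neg] at h ⊢
  rw [Pi.mulSingle, ← piKronecker_update_neg]
  exact semiconjBy_piKronecker_mulSingle h

end PiKronecker

section Pauli

theorem anticommute_pX_pZ : Anticommute pX pZ := by
  simp [Anticommute, pX, pZ]

theorem anticommute_pY_pZ : Anticommute pY pZ := by
  simp [Anticommute, pY, pZ]

variable {P : Fin 5 → Matrix (Fin 2) (Fin 2) ℂ} {i : Fin 5}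

theorem tp5_eq_piKronecker : tp5 P = piKronecker P := rfl

theorem Zon_eq_piKronecker_mulSingle : Zon i = piKronecker (Pi.mulSingle i pZ) := by
  rw [Zon, tp5_eq_piKronecker]
  exact congrArg piKronecker (funext fun j => (Pi.mulSingle_apply i pZ j).symm)

theorem commute_tp5_Zon (h : Commute (P i) pZ) : Commute (tp5 P) (Zon i) := by
  rw [tp5_eq_piKronecker, Zon_eq_piKronecker_mulSingle]
  exact semiconjBy_piKronecker_mulSingle h

theorem anticommute_tp5_Zon (h : Anticommute (P i) pZ) : Anticommute (tp5 P) (Zon i) := by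
  rw [tp5_eq_piKronecker, Zon_eq_piKronecker_mulSingle]
  exact anticommute_piKronecker_mulSingle h

theorem anticommute_A1_Zon (hi : i = 1 ∨ i = 4) : Anticommute A1 (Zon i) := by
  obtain rfl | rfl := hi <;> exact anticommute_tp5_Zon anticommute_pX_pZ

theorem commute_A1_Zon (hi : i = 2 ∨ i = 3) : Commute A1 (Zon i) := by
  obtain rfl | rfl := hi <;> exact commute_tp5_Zon (Commute.refl pZ)

theorem anticommute_A2_Zon (hi : i ≠ 0) : Anticommute A2 (Zon i) := by
  apply anticommute_tp5_Zon
  fin_cases i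
  · contradiction
  · exact anticommute_pY_pZ
  · exact anticommute_pX_pZ
  · exact anticommute_pX_pZ
  · exact anticommute_pY_pZ

theorem anticommute_B_Zon_one_mul_Zon_four : Anticommute B (Zon 1 * Zon 4) :=
  have commute_one : Commute B (Zon 1) := commute_tp5_Zon (Commute.one_left pZ)
  have anticommute_four : Anticommute B (Zon 4) := anticommute_tp5_Zon anticommute_pY_pZ
  anticommute_four.commute_mul commute_one

theorem anticommute_B_Zon_two_mul_Zon_three : Anticommute B (Zon 2 * Zon 3) :=
  have anticommute_two : Anticommute B (Zon 2) := anticommute_tp5_Zon anticommute_pY_pZ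
  have commute_three : Commute B (Zon 3) := commute_tp5_Zon (Commute.refl pZ)
  anticommute_two.mul_commute commute_three

end Pauli

/-- qubits here are 0-indexed, so the paper's sites `2,…,5` are `1,…,4`:
(a) each single-`Z` error on qubits `2..5` anticommutes with one of `A₁,A₂,A₃`;
(b) each weight-2 `Z`-error `Z_iZ_j` on qubits `2..5` with `(i,j) ∉ {(2,5),(3,4)}`
anticommutes with one of `A₁,A₂,A₃`; (c) `B` anticommutes with `Z₂Z₅` and `Z₃Z₄`. -/
theorem stmt6 :
    (∀ i : Fin 5, i ≠ 0 →
      ∃ A ∈ ({A1, A2, A3} : Set (Matrix (Fin 5 → Fin 2) (Fin 5 → Fin 2) ℂ)),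
        A * Zon i = -(Zon i * A))
    ∧ (∀ i j : Fin 5, 0 < i → i < j →
        ¬((i = 1 ∧ j = 4) ∨ (i = 2 ∧ j = 3)) →
      ∃ A ∈ ({A1, A2, A3} : Set (Matrix (Fin 5 → Fin 2) (Fin 5 → Fin 2) ℂ)),
        A * (Zon i * Zon j) = -((Zon i * Zon j) * A))
    ∧ B * (Zon 1 * Zon 4) = -((Zon 1 * Zon 4) * B)
    ∧ B * (Zon 2 * Zon 3) = -((Zon 2 * Zon 3) * B) := by
  refine ⟨fun i hi => ⟨A2, by simp, anticommute_A2_Zon hi⟩,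
    fun i j hi hij hne => ⟨A1, by simp, ?_⟩,
    anticommute_B_Zon_one_mul_Zon_four, anticommute_B_Zon_two_mul_Zon_three⟩
  have one_site_in_each_pair :
      (i = 1 ∨ i = 4) ∧ (j = 2 ∨ j = 3) ∨ (i = 2 ∨ i = 3) ∧ (j = 1 ∨ j = 4) := by
    lia
  rcases one_site_in_each_pair with ⟨hi_anti, hj_comm⟩ | ⟨hi_comm, hj_anti⟩
  · exact (anticommute_A1_Zon hi_anti).mul_commute (commute_A1_Zon hj_comm)
  · exact (anticommute_A1_Zon hj_anti).commute_mul (commute_A1_Zon hi_comm)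
end
end

section
/- Let X, Y, Z denote the 2×2 Pauli matrices, I the 2×2 identity, ⊗ the Kronecker product, g₁ = X⊗Z⊗Z⊗X⊗I, g₂ = I⊗X⊗Z⊗Z⊗X, g₃ = X⊗I⊗X⊗Z⊗Z, g₄ = Z⊗X⊗I⊗X⊗Z, Z̄ = Z⊗Z⊗Z⊗Z⊗Z, and let v ∈ (ℂ²)^⊗5 be a unit vector with gᵢ v = v for i = 1,…,4 and Z̄ v = v (a logical-zero state of the five-qubit code). Then for every 2×2 complex matrix M and every operator Q of the form Q = Z_i (some i ∈ {2,3,4,5}) or Q = Z_i·Z_j (2 ≤ i < j ≤ 5), where Z_i is the 5-fold Kronecker product with Z in the i-th factor and I elsewhere, one has ⟨v, (M⊗I⊗I⊗I⊗I)·Q·v⟩ = 0. Equivalently, the partial trace over qubits 2–5 of Q·|v⟩⟨v| is the zero operator on the first qubit. -/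
/-!
The stabilizer group of the logical-zero state contains `g₂ = I⊗X⊗Z⊗Z⊗X`, `g₁g₃ = I⊗Z⊗ZX⊗XZ⊗Z` and
`Z̄g₄ = I⊗ZX⊗Z⊗ZX⊗I`. Being trivial on the first qubit, they commute with every `M ⊗ I⊗I⊗I⊗I`, and
they anticommute with a `Z`-string as soon as an odd number of its `Z`s meet factors containing `X`.
These factors sit at the qubits `{1, 4}`, `{2, 3}` and `{1, 3}` (0-indexed), and every nonempty
proper subset of `{1, 2, 3, 4}` has odd intersection with one of these pairs. An operator `T` that
anticommutes with a stabilizer `S` of `v` satisfies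
`⟨v, T v⟩ = ⟨v, S T v⟩ = -⟨v, T S v⟩ = -⟨v, T v⟩`.
-/

open Matrix

noncomputable section

/-- The four stabilizer generators of the five-qubit perfect code. -/
def gs : Fin 4 → Matrix (Fin 5 → Fin 2) (Fin 5 → Fin 2) ℂ :=
  ![tp5 ![pX, pZ, pZ, pX, 1], tp5 ![1, pX, pZ, pZ, pX],
    tp5 ![pX, 1, pX, pZ, pZ], tp5 ![pZ, pX, 1, pX, pZ]]

/-- The logical operator `Z̄ = Z⊗Z⊗Z⊗Z⊗Z`. -/
def Zbar : Matrix (Fin 5 → Fin 2) (Fin 5 → Fin 2) ℂ := tp5 ![pZ, pZ, pZ, pZ, pZ]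

section Stabilizer

variable {n R : Type*} [Fintype n]

/-- The matrices fixing `v` from the left and `star v` from the right. For a unitary matrix the
second condition follows from the first; requiring both gives a submonoid without mentioning
unitarity. -/
def twoSidedStabilizer [DecidableEq n] [Semiring R] [Star R] (v : n → R) :
    Submonoid (Matrix n n R) where
  carrier := {S | S *ᵥ v = v ∧ star v ᵥ* S = star v}
  one_mem' := ⟨one_mulVec v, vecMul_one (star v)⟩
  mul_mem' := by
    rintro S T ⟨hS, hS'⟩ ⟨hT, hT'⟩
    exact ⟨by rw [← mulVec_mulVec, hT, hS], by rw [← vecMul_vecMul, hS', hT']⟩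

lemma mem_twoSidedStabilizer_of_isHermitian [DecidableEq n] [Semiring R] [StarRing R]
    {v : n → R} {S : Matrix n n R} (hS : S.IsHermitian) (hv : S *ᵥ v = v) :
    S ∈ twoSidedStabilizer v :=
  ⟨hv, by rw [← hS.eq, ← star_mulVec, hv]⟩

lemma expectation_eq_zero_of_semiconjBy_neg [DecidableEq n] [Ring R] [IsAddTorsionFree R] [Star R]
    {v : n → R} {S T : Matrix n n R} (hS : S ∈ twoSidedStabilizer v)
    (hST : SemiconjBy S T (-T)) : star v ⬝ᵥ T *ᵥ v = 0 := by
  obtain ⟨hv, hv'⟩ := hS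
  refine self_eq_neg.mp ?_
  calc
    star v ⬝ᵥ T *ᵥ v = star v ᵥ* S ⬝ᵥ T *ᵥ v := by rw [hv']
    _ = star v ⬝ᵥ (S * T) *ᵥ v := by rw [← dotProduct_mulVec, mulVec_mulVec]
    _ = -(star v ⬝ᵥ T *ᵥ S *ᵥ v) := by
      rw [hST.eq, neg_mul, neg_mulVec, dotProduct_neg, mulVec_mulVec]
    _ = -(star v ⬝ᵥ T *ᵥ v) := by rw [hv]

end Stabilizer

section TensorProduct

variable {P Q Q' : Fin 5 → Matrix (Fin 2) (Fin 2) ℂ}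

lemma tp5_mul (P Q : Fin 5 → Matrix (Fin 2) (Fin 2) ℂ) : tp5 P * tp5 Q = tp5 (P * Q) := by
  ext x y
  simp only [tp5, Pi.mul_apply, mul_apply, Finset.prod_univ_sum, Fintype.piFinset_univ,
    Finset.prod_mul_distrib]

lemma tp5_smul (c : Fin 5 → ℂ) (P : Fin 5 → Matrix (Fin 2) (Fin 2) ℂ) :
    tp5 (fun i => c i • P i) = (∏ i, c i) • tp5 P := by
  ext x y
  simp only [tp5, Matrix.smul_apply, smul_eq_mul, Finset.prod_mul_distrib]

lemma tp5_isHermitian (hP : ∀ i, (P i).IsHermitian) : (tp5 P).IsHermitian := by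
  ext x y
  simp only [tp5, conjTranspose_apply, star_prod, (hP _).apply]

lemma tp5_semiconjBy (h : ∀ i, SemiconjBy (P i) (Q i) (Q' i)) :
    SemiconjBy (tp5 P) (tp5 Q) (tp5 Q') := by
  rw [SemiconjBy, tp5_mul, tp5_mul]
  exact congrArg tp5 (funext h)

end TensorProduct

lemma pX_isHermitian : pX.IsHermitian := by
  ext i j
  fin_cases i <;> fin_cases j <;> simp [pX]

lemma pZ_isHermitian : pZ.IsHermitian := by
  ext i j
  fin_cases i <;> fin_cases j <;> simp [pZ]

lemma pX_mul_self : pX * pX = 1 := by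
  simp [pX, one_fin_two]

lemma pZ_mul_self : pZ * pZ = 1 := by
  simp [pZ, one_fin_two]

lemma pX_semiconjBy_pZ : SemiconjBy pX pZ (-pZ) := by
  simp [SemiconjBy, pX, pZ]

lemma gs_isHermitian (i : Fin 4) : (gs i).IsHermitian := by
  fin_cases i <;> refine tp5_isHermitian fun k => ?_ <;> fin_cases k <;>
    first | exact pX_isHermitian | exact pZ_isHermitian | exact isHermitian_one

lemma Zbar_isHermitian : Zbar.IsHermitian :=
  tp5_isHermitian fun k => by fin_cases k <;> exact pZ_isHermitian

/-- The `Z`-string on `s`: Pauli `Z` on the qubits in `s` and the identity elsewhere. -/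
def zString (s : Finset (Fin 5)) : Matrix (Fin 5 → Fin 2) (Fin 5 → Fin 2) ℂ :=
  tp5 fun k => if k ∈ s then pZ else 1

lemma Zon_eq_zString (i : Fin 5) : Zon i = zString {i} := by
  simp only [Zon, zString, Finset.mem_singleton]

lemma zString_mul (s t : Finset (Fin 5)) : zString s * zString t = zString (symmDiff s t) := by
  rw [zString, zString, tp5_mul]
  congr 1
  ext k : 1
  by_cases hs : k ∈ s <;> by_cases ht : k ∈ t <;>
    simp [Finset.mem_symmDiff, hs, ht, pZ_mul_self]

lemma tp5_semiconjBy_zString {P : Fin 5 → Matrix (Fin 2) (Fin 2) ℂ} {t : Finset (Fin 5)}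
    (hP : ∀ i, SemiconjBy (P i) pZ (if i ∈ t then -pZ else pZ)) (s : Finset (Fin 5)) :
    SemiconjBy (tp5 P) (zString s) ((-1 : ℂ) ^ (s ∩ t).card • zString s) := by
  have hsign : (-1 : ℂ) ^ (s ∩ t).card = ∏ i, if i ∈ s ∩ t then -1 else 1 := by
    rw [Finset.prod_ite_mem, Finset.univ_inter, Finset.prod_const]
  rw [hsign, zString, ← tp5_smul]
  refine tp5_semiconjBy fun i => ?_
  specialize hP i
  by_cases hs : i ∈ s <;> by_cases ht : i ∈ t <;> simp_all

lemma expectation_mul_zString_eq_zero {v : (Fin 5 → Fin 2) → ℂ}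
    {P : Fin 5 → Matrix (Fin 2) (Fin 2) ℂ} {s t : Finset (Fin 5)}
    (hv : tp5 P ∈ twoSidedStabilizer v) (hP₀ : P 0 = 1)
    (hP : ∀ i, SemiconjBy (P i) pZ (if i ∈ t then -pZ else pZ)) (hst : Odd (s ∩ t).card)
    (M : Matrix (Fin 2) (Fin 2) ℂ) :
    star v ⬝ᵥ (tp5 (fun k => if k = 0 then M else 1) * zString s) *ᵥ v = 0 := by
  have hcomm : Commute (tp5 P) (tp5 fun k => if k = 0 then M else 1) :=
    tp5_semiconjBy fun i => by
      by_cases hi : i = 0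
      · subst hi
        rw [hP₀]
        exact .one_left _
      · simp [hi]
  have hanti : SemiconjBy (tp5 P) (zString s) (-zString s) := by
    simpa [hst.neg_one_pow] using tp5_semiconjBy_zString hP s
  refine expectation_eq_zero_of_semiconjBy_neg hv ?_
  simpa only [mul_neg] using SemiconjBy.mul_right hcomm hanti

lemma gs_zero_mul_gs_two : gs 0 * gs 2 = tp5 ![1, pZ, pZ * pX, pX * pZ, pZ] := by
  refine (tp5_mul _ _).trans (congrArg tp5 (funext fun i => ?_))
  fin_cases i <;> simp [pX_mul_self]

lemma Zbar_mul_gs_three : Zbar * gs 3 = tp5 ![1, pZ * pX, pZ, pZ * pX, 1] := by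
  refine (tp5_mul _ _).trans (congrArg tp5 (funext fun i => ?_))
  fin_cases i <;> simp [pZ_mul_self]

lemma odd_card_inter_of_ssubset_compl_zero {s : Finset (Fin 5)} (hs : s.Nonempty)
    (hs' : s ⊂ {0}ᶜ) :
    Odd (s ∩ {1, 4}).card ∨ Odd (s ∩ {2, 3}).card ∨ Odd (s ∩ {1, 3}).card := by
  decide +revert

theorem stmt7_general {v : (Fin 5 → Fin 2) → ℂ} (hstab : ∀ i, gs i *ᵥ v = v)
    (hZ : Zbar *ᵥ v = v) (M : Matrix (Fin 2) (Fin 2) ℂ) {s : Finset (Fin 5)} (hs : s.Nonempty)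
    (hs' : s ⊂ {0}ᶜ) :
    star v ⬝ᵥ (tp5 (fun k => if k = 0 then M else 1) * zString s) *ᵥ v = 0 := by
  have hg (i : Fin 4) : gs i ∈ twoSidedStabilizer v :=
    mem_twoSidedStabilizer_of_isHermitian (gs_isHermitian i) (hstab i)
  have hZbar : Zbar ∈ twoSidedStabilizer v :=
    mem_twoSidedStabilizer_of_isHermitian Zbar_isHermitian hZ
  have hX := pX_semiconjBy_pZ
  have hZZ : SemiconjBy pZ pZ pZ := Commute.refl pZ
  have hZX : SemiconjBy (pZ * pX) pZ (-pZ) := hZZ.neg_right.mul_left hX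
  have hXZ : SemiconjBy (pX * pZ) pZ (-pZ) := hX.mul_left hZZ
  rcases odd_card_inter_of_ssubset_compl_zero hs hs' with hodd | hodd | hodd
  · refine expectation_mul_zString_eq_zero (P := ![1, pX, pZ, pZ, pX]) (hg 1) rfl ?_ hodd M
    simp [Fin.forall_fin_succ, hX, hZZ]
  · refine expectation_mul_zString_eq_zero
      (gs_zero_mul_gs_two ▸ mul_mem (hg 0) (hg 2)) rfl ?_ hodd M
    simp [Fin.forall_fin_succ, hZX, hXZ, hZZ]
  · refine expectation_mul_zString_eq_zero
      (Zbar_mul_gs_three ▸ mul_mem hZbar (hg 3)) rfl ?_ hodd M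
    simp [Fin.forall_fin_succ, hZX, hZZ]

/-- qubits 0-indexed; the paper's sites `2,…,5` are `1,…,4`: for the
logical-zero state `v` of the five-qubit code, every weight-1 or weight-2 `Z`-type
insertion `Q` supported on qubits `2..5` satisfies `⟨v, (M ⊗ I⊗I⊗I⊗I) Q v⟩ = 0` for
all `2×2` matrices `M`; i.e. the one-qubit marginal of `Q·|v⟩⟨v|` vanishes. -/
theorem stmt7 (v : (Fin 5 → Fin 2) → ℂ) (hnorm : star v ⬝ᵥ v = 1)
    (hstab : ∀ i : Fin 4, (gs i).mulVec v = v) (hZ : Zbar.mulVec v = v) :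
    ∀ (M : Matrix (Fin 2) (Fin 2) ℂ)
      (Q : Matrix (Fin 5 → Fin 2) (Fin 5 → Fin 2) ℂ),
      ((∃ i : Fin 5, i ≠ 0 ∧ Q = Zon i)
        ∨ (∃ i j : Fin 5, 0 < i ∧ i < j ∧ Q = Zon i * Zon j)) →
      star v ⬝ᵥ (tp5 (fun k => if k = 0 then M else 1) * Q).mulVec v = 0 := by
  rintro M Q (⟨i, hi, rfl⟩ | ⟨i, j, hi, hij, rfl⟩)
  · rw [Zon_eq_zString]
    exact stmt7_general hstab hZ M (Finset.singleton_nonempty i) (by decide +revert)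
  · rw [Zon_eq_zString, Zon_eq_zString, zString_mul]
    exact stmt7_general hstab hZ M (by decide +revert) (by decide +revert)
end
end

section
/- Let X, Y, Z denote the 2×2 Pauli matrices, I the 2×2 identity, ⊗ the Kronecker product, g₁ = X⊗Z⊗Z⊗X⊗I, g₂ = I⊗X⊗Z⊗Z⊗X, g₃ = X⊗I⊗X⊗Z⊗Z, g₄ = Z⊗X⊗I⊗X⊗Z, Z̄ = Z⊗Z⊗Z⊗Z⊗Z, and let v ∈ (ℂ²)^⊗5 be a unit vector with gᵢ v = v for i = 1,…,4 and Z̄ v = v (a logical-zero state of the five-qubit code). Let θ ∈ ℝ and let (s_{ij})_{i≠j, i,j ∈ {1,…,5}} be real numbers with cos²θ + Σ_{i≠j} s_{ij}² = 1. Define the vector Ψ = cosθ·(v ⊗ v) + Σ_{i≠j} s_{ij}·(Z_i v) ⊗ (Z_j v) in (ℂ²)^⊗5 ⊗ (ℂ²)^⊗5, where Z_i is the 5-fold Kronecker product with Z in the i-th factor and I elsewhere. Then Ψ is a unit vector, and for every k ∈ {1,…,5} and every 4×4 complex matrix M, inserting M on the pair of qubits (qubit k of the first five-qubit register, qubit k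 of the second register) with the identity on the remaining eight qubits gives ⟨Ψ, M̃ Ψ⟩ = Tr(M)/4, where M̃ denotes this insertion. That is, the reduced density matrix of Ψ on each of the five dimension-4 legs is maximally mixed, so Ψ is a 1-isometric tensor defining a [[5,0,2]]₄ code. -/
open Matrix

noncomputable section

/-- The tensor product of two vectors of `(ℂ²)^⊗5`, as a vector of
`(ℂ²)^⊗5 ⊗ (ℂ²)^⊗5`. -/
def vtens (v w : (Fin 5 → Fin 2) → ℂ) :
    (Fin 5 → Fin 2) × (Fin 5 → Fin 2) → ℂ :=
  fun p => v p.1 * w p.2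

/-- The insertion of a `4×4` matrix `M` on the `k`-th dimension-4 leg, i.e. on the
pair (qubit `k` of the first five-qubit register, qubit `k` of the second register),
with the identity on the remaining eight qubits. -/
def legIns (k : Fin 5) (M : Matrix (Fin 2 × Fin 2) (Fin 2 × Fin 2) ℂ) :
    Matrix ((Fin 5 → Fin 2) × (Fin 5 → Fin 2))
      ((Fin 5 → Fin 2) × (Fin 5 → Fin 2)) ℂ :=
  fun p q => M (p.1 k, p.2 k) (q.1 k, q.2 k)
    * (if ∀ l, l ≠ k → p.1 l = q.1 l ∧ p.2 l = q.2 l then 1 else 0)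

/-!
The stabilizers of `v` force `|v x| ^ 2 = (1 + (-1) ^ |x|) / 2 ^ n`: the state has constant modulus
on the strings of even weight and vanishes elsewhere. Changing one bit changes the parity, so a
one-qubit operator acts on the span of `v` and the `Z_i v` only through its diagonal. In that
orthonormal frame an operator `A` on qubit `k` becomes `tr A / 2` times the identity plus
`tr (A Z) / 2` times the exchange of `v` and `Z_k v`. The tensor has coefficient matrix `C` in this
frame, so `⟨Ψ, (A ⊗ B) Ψ⟩ = tr (Cᴴ G_A C G_Bᵀ)` for the compressions `G_A`, `G_B`. The three terms
containing an exchange vanish: exchanging `v` and `Z_k v` on a single copy changes the number of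
errors in each term, and doing so on both copies could only match `v ⊗ v` with the excluded
`Z_k v ⊗ Z_k v`. What remains is `tr A * tr B / 4`, and the products `A ⊗ B` span all `M`.
-/

open scoped Kronecker

section Walsh

variable {ι : Type*} [Fintype ι]

/-- The character `x ↦ (-1) ^ (z · x)` of the group of binary strings, i.e. the diagonal of the
tensor product of Pauli `Z`s on the support of `z`. -/
def walsh (z x : ι → Fin 2) : ℂ := ∏ i, (-1) ^ ((z i : ℕ) * (x i : ℕ))

lemma walsh_zero_left (x : ι → Fin 2) : walsh 0 x = 1 := by simp [walsh]

lemma walsh_add_left (z w x : ι → Fin 2) : walsh (z + w) x = walsh z x * walsh w x := by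
  have neg_one_pow_add_mul (a b c : Fin 2) : (-1 : ℂ) ^ (((a + b : Fin 2) : ℕ) * (c : ℕ)) =
      (-1) ^ ((a : ℕ) * (c : ℕ)) * (-1) ^ ((b : ℕ) * (c : ℕ)) := by
    fin_cases a <;> fin_cases b <;> fin_cases c <;> simp
  simp only [walsh, Pi.add_apply, neg_one_pow_add_mul, Finset.prod_mul_distrib]

lemma star_walsh (z x : ι → Fin 2) : star (walsh z x) = walsh z x := by
  simp [walsh]

lemma norm_walsh (z x : ι → Fin 2) : ‖walsh z x‖ = 1 := by
  simp [walsh]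

lemma walsh_one_left (x : ι → Fin 2) : walsh 1 x = (-1) ^ ∑ i, (x i : ℕ) := by
  simp [walsh, Finset.prod_pow_eq_pow_sum]

lemma walsh_one_eq_or (x : ι → Fin 2) : walsh 1 x = 1 ∨ walsh 1 x = -1 := by
  rw [walsh_one_left]
  exact neg_one_pow_eq_or ℂ _

lemma walsh_one_eq_one_iff (x : ι → Fin 2) : walsh 1 x = 1 ↔ Even (∑ i, (x i : ℕ)) := by
  rw [walsh_one_left, neg_one_pow_eq_one_iff_even (by norm_num)]

lemma eq_of_walsh_one_eq_of_eq_off {k : ι} {x y : ι → Fin 2} (hpar : walsh 1 x = walsh 1 y)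
    (hoff : ∀ i ≠ k, x i = y i) : x = y := by
  classical
  have hprod : ∏ i ∈ {k}ᶜ, (-1 : ℂ) ^ (x i : ℕ) = ∏ i ∈ {k}ᶜ, (-1 : ℂ) ^ (y i : ℕ) :=
    Finset.prod_congr rfl fun i hi ↦ by rw [hoff i (by simpa using hi)]
  have hne : ∏ i ∈ {k}ᶜ, (-1 : ℂ) ^ (y i : ℕ) ≠ 0 :=
    Finset.prod_ne_zero_iff.2 fun i _ ↦ pow_ne_zero _ (by norm_num)
  have hk : (-1 : ℂ) ^ (x k : ℕ) = (-1) ^ (y k : ℕ) := by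
    simpa [walsh, Fintype.prod_eq_mul_prod_compl k, hprod, hne] using hpar
  have neg_one_pow_injective (a b : Fin 2) (h : (-1 : ℂ) ^ (a : ℕ) = (-1) ^ (b : ℕ)) : a = b := by
    revert h
    fin_cases a <;> fin_cases b <;> norm_num
  funext i
  by_cases hi : i = k
  · exact hi ▸ neg_one_pow_injective _ _ hk
  · exact hoff i hi

variable [DecidableEq ι]

lemma walsh_single_one (k : ι) (x : ι → Fin 2) :
    walsh (Pi.single k 1) x = (-1) ^ (x k : ℕ) := by
  rw [walsh, Finset.prod_eq_single k]
  · simp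
  · intro i _ hi
    simp [Pi.single_eq_of_ne hi]
  · simp

lemma sum_walsh (z : ι → Fin 2) :
    ∑ x, walsh z x = if z = 0 then 2 ^ Fintype.card ι else 0 := by
  have sum_bit (a : Fin 2) :
      ∑ b : Fin 2, (-1 : ℂ) ^ ((a : ℕ) * (b : ℕ)) = if a = 0 then 2 else 0 := by
    fin_cases a <;> norm_num
  simp only [walsh, ← Fintype.prod_sum fun i (b : Fin 2) ↦ (-1 : ℂ) ^ ((z i : ℕ) * (b : ℕ)),
    sum_bit, Fintype.prod_ite_zero, funext_iff, Pi.zero_apply, Finset.prod_const,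
    Finset.card_univ]

end Walsh

section EvenFlat

variable {ι : Type*} [Fintype ι] {v : (ι → Fin 2) → ℂ}

/-- The state `v` is supported on the strings of even weight, with constant modulus there. The
factor `1 + walsh 1 x` is twice the indicator function of even weight. -/
def IsEvenFlat (v : (ι → Fin 2) → ℂ) : Prop :=
  ∀ x, star (v x) * v x = (1 + walsh 1 x) / 2 ^ Fintype.card ι

lemma IsEvenFlat.walsh_one_eq_one (hv : IsEvenFlat v) {x : ι → Fin 2} (hx : v x ≠ 0) :
    walsh 1 x = 1 := by
  refine (walsh_one_eq_or x).resolve_right fun hodd ↦ hx ?_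
  simpa [hodd] using hv x

variable [DecidableEq ι]

lemma isEvenFlat_of_norm_eq [Nonempty ι] (hnorm : star v ⬝ᵥ v = 1)
    (hodd : ∀ x, walsh 1 x = -1 → v x = 0) (heven : ∀ x, walsh 1 x = 1 → ‖v x‖ = ‖v 0‖) :
    IsEvenFlat v := by
  have hsq (x : ι → Fin 2) : star (v x) * v x = (‖v 0‖ : ℂ) ^ 2 / 2 * (1 + walsh 1 x) := by
    rcases walsh_one_eq_or x with hx | hx
    · rw [← heven x hx, hx, Complex.star_def, Complex.conj_mul']
      ring
    · simp [hodd x hx, hx]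
  have hone : (1 : ι → Fin 2) ≠ 0 := fun h ↦
    one_ne_zero (congrFun h (Classical.arbitrary ι))
  have htotal : (‖v 0‖ : ℂ) ^ 2 / 2 * 2 ^ Fintype.card ι = 1 := by
    rw [← hnorm]
    simp only [dotProduct, Pi.star_apply, hsq, ← Finset.mul_sum, Finset.sum_add_distrib, sum_walsh,
      if_neg hone]
    simp
  intro x
  rw [hsq, eq_div_iff (pow_ne_zero _ two_ne_zero)]
  linear_combination (1 + walsh 1 x) * htotal

lemma IsEvenFlat.sum_mul_walsh (hv : IsEvenFlat v) (z : ι → Fin 2) :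
    ∑ x, star (v x) * v x * walsh z x = (if z = 0 then 1 else 0) + if z = 1 then 1 else 0 := by
  have hz : 1 + z = 0 ↔ z = 1 := by
    simp only [funext_iff, Pi.add_apply, Pi.one_apply, Pi.zero_apply]
    exact forall_congr' fun i ↦ by lia
  have hterm (x : ι → Fin 2) : star (v x) * v x * walsh z x =
      (walsh z x + walsh (1 + z) x) / 2 ^ Fintype.card ι := by
    rw [hv x, walsh_add_left]
    ring
  simp only [hterm, ← Finset.sum_div, Finset.sum_add_distrib, sum_walsh, hz]
  rw [add_div]
  congr 1 <;> split_ifs <;> simp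

end EvenFlat

section QubitOp

variable {ι : Type*} [Fintype ι]

/-- The tensor product `⨂ i, P i` of one-qubit operators, on qubits labelled by `ι`; this is `tp5`
for five qubits. -/
def tensorOp (P : ι → Matrix (Fin 2) (Fin 2) ℂ) : Matrix (ι → Fin 2) (ι → Fin 2) ℂ :=
  fun x y ↦ ∏ i, P i (x i) (y i)

variable [DecidableEq ι]

/-- The one-qubit operator `A` acting on qubit `k`, with the identity on all other qubits; `Zon i`
is the case `A = pZ`. -/
def qubitOp (k : ι) (A : Matrix (Fin 2) (Fin 2) ℂ) : Matrix (ι → Fin 2) (ι → Fin 2) ℂ :=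
  tensorOp fun i ↦ if i = k then A else 1

lemma qubitOp_apply (k : ι) (A : Matrix (Fin 2) (Fin 2) ℂ) (x y : ι → Fin 2) :
    qubitOp k A x y = A (x k) (y k) * if ∀ i, i ≠ k → x i = y i then 1 else 0 := by
  have hoff : ∏ i ∈ {k}ᶜ, (if i = k then A else 1) (x i) (y i) =
      ∏ i ∈ {k}ᶜ, if x i = y i then (1 : ℂ) else 0 :=
    Finset.prod_congr rfl fun i hi ↦ by
      rw [if_neg (by simpa using hi), Matrix.one_apply]
  rw [qubitOp, tensorOp, Fintype.prod_eq_mul_prod_compl k, hoff, Finset.prod_boole]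
  simp

lemma qubitOp_one (k : ι) : qubitOp k 1 = 1 := by
  ext x y
  simp [qubitOp, tensorOp, Matrix.one_apply, Fintype.prod_boole, funext_iff]

/-- The operator `M` acting on the `k`-th leg of a pair of registers, i.e. on qubit `k` of both
registers, with the identity elsewhere; this is `legIns` for registers of five qubits. -/
def legInsertion (k : ι) (M : Matrix (Fin 2 × Fin 2) (Fin 2 × Fin 2) ℂ) :
    Matrix ((ι → Fin 2) × (ι → Fin 2)) ((ι → Fin 2) × (ι → Fin 2)) ℂ :=
  fun p q ↦ M (p.1 k, p.2 k) (q.1 k, q.2 k)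
    * (if ∀ l, l ≠ k → p.1 l = q.1 l ∧ p.2 l = q.2 l then 1 else 0)

lemma legInsertion_zero (k : ι) : legInsertion k 0 = 0 := by
  ext p q
  simp [legInsertion]

lemma legInsertion_add (k : ι) (M N : Matrix (Fin 2 × Fin 2) (Fin 2 × Fin 2) ℂ) :
    legInsertion k (M + N) = legInsertion k M + legInsertion k N := by
  ext p q
  simp only [legInsertion, Matrix.add_apply, add_mul]

lemma legInsertion_kronecker (k : ι) (A B : Matrix (Fin 2) (Fin 2) ℂ) :
    legInsertion k (A ⊗ₖ B) = qubitOp k A ⊗ₖ qubitOp k B := by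
  ext p q
  simp only [legInsertion, kroneckerMap_apply, qubitOp_apply, mul_mul_mul_comm (A _ _),
    ite_zero_mul_ite_zero, mul_one, imp_and, forall_and]

lemma legInsertion_one (k : ι) : legInsertion k 1 = 1 := by
  rw [← one_kronecker_one, legInsertion_kronecker, qubitOp_one, one_kronecker_one]

end QubitOp

section ErrorFrame

variable {ι : Type*} [DecidableEq ι]

/-- The binary string of a Pauli `Z` error affecting at most one qubit: `none` stands for no error
and `some i` for an error on qubit `i`. -/
def errorString : Option ι → ι → Fin 2
  | none => 0
  | some i => Pi.single i 1

lemma errorString_add_eq_zero_iff {e d : Option ι} :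
    errorString e + errorString d = 0 ↔ e = d := by
  constructor
  · intro h
    have hval (i : ι) := congrFun h i
    rcases e with _ | i <;> rcases d with _ | j
    · rfl
    · simpa [errorString] using hval j
    · simpa [errorString] using hval i
    · by_contra hij
      have hij : i ≠ j := by simpa using hij
      simpa [errorString, hij] using hval i
  · rintro rfl
    funext i
    simp only [Pi.add_apply, Pi.zero_apply]
    lia

lemma errorString_add_add_some_eq_zero_iff {e d : Option ι} {k : ι} :
    errorString e + errorString d + errorString (some k) = 0 ↔
      e = none ∧ d = some k ∨ e = some k ∧ d = none := by
  rcases e with _ | i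
  · rw [errorString, zero_add, errorString_add_eq_zero_iff]
    simp
  rcases d with _ | j
  · rw [show errorString (none : Option ι) = 0 from rfl, add_zero, errorString_add_eq_zero_iff]
    simp
  simp only [reduceCtorEq, and_false, false_and, or_self, iff_false]
  intro h
  by_cases hij : i = j
  · rw [errorString_add_eq_zero_iff.2 (congrArg some hij), zero_add] at h
    simp [errorString] at h
  · have hik : i = k := by
      by_contra hik
      simpa [errorString, hij, hik] using congrFun h i
    have hjk : j = k := by
      by_contra hjk
      simpa [errorString, Ne.symm hij, hjk] using congrFun h j
    exact hij (hik.trans hjk.symm)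

/-- The operator exchanging the error-free state with the state having an error on qubit `k`, and
annihilating all other error states. -/
def errorFlip (k : ι) : Matrix (Option ι) (Option ι) ℂ :=
  single none (some k) 1 + single (some k) none 1

lemma transpose_errorFlip (k : ι) : (errorFlip k)ᵀ = errorFlip k := by
  simp [errorFlip, add_comm]

variable [Fintype ι]

lemma errorString_add_add_ne_one (hι : 3 < Fintype.card ι) (e d f : Option ι) :
    errorString e + errorString d + errorString f ≠ 1 := by
  obtain ⟨i, hi⟩ : ∃ i, some i ∉ ({e, d, f} : Finset (Option ι)) := by
    by_contra! h
    have hsub : Finset.univ.map Function.Embedding.some ⊆ ({e, d, f} : Finset (Option ι)) := by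
      intro a ha
      obtain ⟨i, -, rfl⟩ := Finset.mem_map.1 ha
      exact h i
    have hcard := (Finset.card_le_card hsub).trans Finset.card_le_three
    rw [Finset.card_map, Finset.card_univ] at hcard
    lia
  have errorString_of_ne (a : Option ι) (ha : some i ≠ a) : errorString a i = 0 := by
    cases a <;> simp_all [errorString]
  simp only [Finset.mem_insert, Finset.mem_singleton, not_or] at hi
  intro h
  simpa [errorString_of_ne, hi] using congrFun h i

lemma errorFlip_apply (k : ι) (e d : Option ι) :
    errorFlip k e d =
      if errorString e + errorString d + errorString (some k) = 0 then 1 else 0 := by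
  simp only [errorFlip, Matrix.add_apply, single_apply, errorString_add_add_some_eq_zero_iff]
  rcases e with _ | i <;> rcases d with _ | j <;> simp [eq_comm]

variable (ι) in
/-- The diagonals of the errors `Z_e`, for `e` an error on at most one qubit, as the columns of a
matrix. -/
def errorSigns : Matrix (ι → Fin 2) (Option ι) ℂ :=
  fun x e ↦ walsh (errorString e) x

/-- The states `Z_e v`, for `e` an error on at most one qubit, as the columns of a matrix. -/
def errorFrame (v : (ι → Fin 2) → ℂ) : Matrix (ι → Fin 2) (Option ι) ℂ :=
  diagonal v * errorSigns ι

variable {v : (ι → Fin 2) → ℂ}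

lemma IsEvenFlat.diagonal_mul_qubitOp_mul_diagonal (hv : IsEvenFlat v) (k : ι)
    (A : Matrix (Fin 2) (Fin 2) ℂ) :
    diagonal (star v) * qubitOp k A * diagonal v =
      diagonal fun x ↦ star (v x) * v x * A (x k) (x k) := by
  ext x y
  rw [mul_diagonal, diagonal_mul, qubitOp_apply, Pi.star_apply]
  by_cases hxy : x = y
  · subst hxy
    simp [mul_right_comm]
  rw [diagonal_apply_ne _ hxy]
  by_cases hx : v x = 0
  · simp [hx]
  by_cases hy : v y = 0
  · simp [hy]
  have hpar := (hv.walsh_one_eq_one hx).trans (hv.walsh_one_eq_one hy).symm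
  rw [if_neg fun hoff ↦ hxy (eq_of_walsh_one_eq_of_eq_off hpar hoff)]
  simp

lemma apply_self_eq_trace_add_trace_mul_walsh (A : Matrix (Fin 2) (Fin 2) ℂ) (k : ι)
    (x : ι → Fin 2) :
    A (x k) (x k) =
      A.trace / 2 + (A * pZ).trace / 2 * walsh (errorString (some k)) x := by
  rw [errorString, walsh_single_one]
  generalize x k = a
  fin_cases a <;> simp [pZ, trace_fin_two, mul_apply] <;> ring

lemma IsEvenFlat.compress_qubitOp (hι : 3 < Fintype.card ι) (hv : IsEvenFlat v) (k : ι)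
    (A : Matrix (Fin 2) (Fin 2) ℂ) :
    (errorFrame v)ᴴ * qubitOp k A * errorFrame v =
      (A.trace / 2) • 1 + ((A * pZ).trace / 2) • errorFlip k := by
  have hne (e d : Option ι) : errorString e + errorString d ≠ 1 := by
    simpa [errorString] using errorString_add_add_ne_one hι e d none
  have hfactor : (errorFrame v)ᴴ * qubitOp k A * errorFrame v =
      (errorSigns ι)ᴴ * (diagonal (star v) * qubitOp k A * diagonal v) * errorSigns ι := by
    simp only [errorFrame, conjTranspose_mul, diagonal_conjTranspose, Matrix.mul_assoc]
  ext e d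
  have hterm (x : ι → Fin 2) :
      star (walsh (errorString e) x) * (star (v x) * v x * A (x k) (x k)) *
          walsh (errorString d) x =
        A.trace / 2 * (star (v x) * v x * walsh (errorString e + errorString d) x) +
          (A * pZ).trace / 2 * (star (v x) * v x *
            walsh (errorString e + errorString d + errorString (some k)) x) := by
    rw [star_walsh, apply_self_eq_trace_add_trace_mul_walsh A k x,
      walsh_add_left _ (errorString (some k)), walsh_add_left]
    ring
  rw [hfactor, hv.diagonal_mul_qubitOp_mul_diagonal, mul_apply]
  simp only [mul_diagonal, conjTranspose_apply, errorSigns, hterm, Finset.sum_add_distrib,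
    ← Finset.mul_sum, hv.sum_mul_walsh, errorString_add_eq_zero_iff, hne,
    errorString_add_add_ne_one hι, if_false, add_zero]
  simp [errorFlip_apply, Matrix.one_apply]

end ErrorFrame

section Pauli

variable {ι : Type*} [Fintype ι]

/-- The one-qubit Pauli operator `Z ^ z * X ^ t`, which flips the bit if `t = 1` and then applies
the sign `(-1) ^ (z * a)`. -/
def pauli (t z : Fin 2) : Matrix (Fin 2) (Fin 2) ℂ :=
  fun a b ↦ if b = a + t then (-1) ^ ((z : ℕ) * (a : ℕ)) else 0

lemma pauli_zero_zero : pauli 0 0 = 1 := by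
  ext a b
  fin_cases a <;> fin_cases b <;> simp [pauli]

lemma pauli_one_zero : pauli 1 0 = pX := by
  ext a b
  fin_cases a <;> fin_cases b <;> simp [pauli, pX]

lemma pauli_zero_one : pauli 0 1 = pZ := by
  ext a b
  fin_cases a <;> fin_cases b <;> simp [pauli, pZ]

variable [DecidableEq ι]

lemma tensorOp_pauli_mulVec_apply (t z : ι → Fin 2) (v : (ι → Fin 2) → ℂ) (x : ι → Fin 2) :
    (tensorOp (fun i ↦ pauli (t i) (z i)) *ᵥ v) x = walsh z x * v (x + t) := by
  have hentry (y : ι → Fin 2) :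
      tensorOp (fun i ↦ pauli (t i) (z i)) x y = if y = x + t then walsh z x else 0 := by
    simp [tensorOp, pauli, Fintype.prod_ite_zero, walsh, funext_iff]
  simp [mulVec, dotProduct, hentry]

lemma qubitOp_pZ_mulVec_apply (k : ι) (v : (ι → Fin 2) → ℂ) (x : ι → Fin 2) :
    (qubitOp k pZ *ᵥ v) x = walsh (Pi.single k 1) x * v x := by
  have hpauli : qubitOp k pZ =
      tensorOp fun i ↦ pauli ((0 : ι → Fin 2) i) ((Pi.single k 1 : ι → Fin 2) i) := by
    refine congrArg tensorOp (funext fun i ↦ ?_)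
    rw [Pi.zero_apply, Pi.single_apply, apply_ite (pauli 0), pauli_zero_one, pauli_zero_zero]
  rw [hpauli, tensorOp_pauli_mulVec_apply, add_zero]

lemma norm_apply_add_of_tensorOp_pauli_mulVec_eq {t z : ι → Fin 2} {v : (ι → Fin 2) → ℂ}
    (hv : tensorOp (fun i ↦ pauli (t i) (z i)) *ᵥ v = v) (x : ι → Fin 2) :
    ‖v (x + t)‖ = ‖v x‖ := by
  conv_rhs => rw [← hv, tensorOp_pauli_mulVec_apply, norm_mul, norm_walsh, one_mul]

end Pauli

lemma norm_apply_sum_eq_norm_apply_zero {G ι E : Type*} [AddCommMonoid G] [Norm E]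
    {v : G → E} {t : ι → G} (ht : ∀ i x, ‖v (x + t i)‖ = ‖v x‖) (J : Finset ι) :
    ‖v (∑ i ∈ J, t i)‖ = ‖v 0‖ := by
  classical
  induction J using Finset.induction_on with
  | empty => simp
  | insert i J hi ih => rw [Finset.sum_insert hi, add_comm, ht, ih]

section FiveQubitCode

/-- The bits flipped by the stabilizer generators `gs` of the five-qubit code. -/
def gsFlip : Fin 4 → Fin 5 → Fin 2 :=
  ![![1, 0, 0, 1, 0], ![0, 1, 0, 0, 1], ![1, 0, 1, 0, 0], ![0, 1, 0, 1, 0]]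

/-- The qubits on which the stabilizer generators `gs` of the five-qubit code act by `pZ`. -/
def gsSign : Fin 4 → Fin 5 → Fin 2 :=
  ![![0, 1, 1, 0, 0], ![0, 0, 1, 1, 0], ![0, 0, 0, 1, 1], ![1, 0, 0, 0, 1]]

lemma gs_eq_tensorOp_pauli (i : Fin 4) :
    gs i = tensorOp fun j ↦ pauli (gsFlip i j) (gsSign i j) := by
  fin_cases i <;>
  · refine congrArg tensorOp (funext fun j ↦ ?_)
    fin_cases j <;>
      simp [gsFlip, gsSign, pauli_zero_zero, pauli_one_zero, pauli_zero_one]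

lemma Zbar_eq_tensorOp_pauli :
    Zbar = tensorOp fun j ↦ pauli ((0 : Fin 5 → Fin 2) j) ((1 : Fin 5 → Fin 2) j) := by
  refine congrArg tensorOp (funext fun j ↦ ?_)
  fin_cases j <;> simp [pauli_zero_one]

lemma exists_eq_sum_gsFlip :
    ∀ x : Fin 5 → Fin 2, Even (∑ j, (x j : ℕ)) → ∃ J : Finset (Fin 4), x = ∑ i ∈ J, gsFlip i := by
  decide

lemma isEvenFlat_of_stabilized {v : (Fin 5 → Fin 2) → ℂ} (hnorm : star v ⬝ᵥ v = 1)
    (hstab : ∀ i, gs i *ᵥ v = v) (hZ : Zbar *ᵥ v = v) : IsEvenFlat v := by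
  have hflip (i : Fin 4) : ∀ x, ‖v (x + gsFlip i)‖ = ‖v x‖ :=
    norm_apply_add_of_tensorOp_pauli_mulVec_eq (gs_eq_tensorOp_pauli i ▸ hstab i)
  refine isEvenFlat_of_norm_eq hnorm (fun x hodd ↦ ?_) fun x heven ↦ ?_
  · have hneg : v x = -v x := by
      conv_lhs =>
        rw [← hZ, Zbar_eq_tensorOp_pauli, tensorOp_pauli_mulVec_apply, hodd, add_zero, neg_one_mul]
    exact self_eq_neg.1 hneg
  · obtain ⟨J, rfl⟩ := exists_eq_sum_gsFlip x ((walsh_one_eq_one_iff x).1 heven)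
    exact norm_apply_sum_eq_norm_apply_zero hflip J

end FiveQubitCode

section InsertionCoeff

variable {ι : Type*} [DecidableEq ι]

/-- The coefficients of the imperfect tensor: the entry at `(e, d)` is the coefficient of
`Z_e v ⊗ Z_d v`, where `none` stands for no error. -/
def insertionCoeff (c : ℂ) (s : ι → ι → ℂ) : Matrix (Option ι) (Option ι) ℂ
  | none, none => c
  | some i, some j => if i ≠ j then s i j else 0
  | none, some _ => 0
  | some _, none => 0

variable [Fintype ι] (c : ℂ) (s : ι → ι → ℂ)

lemma trace_conjTranspose_mul_insertionCoeff :
    ((insertionCoeff c s)ᴴ * insertionCoeff c s).trace =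
      ((‖c‖ ^ 2 + ∑ i, ∑ j, if i ≠ j then ‖s i j‖ ^ 2 else 0 : ℝ) : ℂ) := by
  simp only [trace, diag_apply, mul_apply, conjTranspose_apply, Fintype.sum_option,
    Finset.sum_add_distrib]
  rw [Finset.sum_comm]
  have hentry (i j : ι) :
      star (if i ≠ j then s i j else 0) * (if i ≠ j then s i j else 0) =
        ((if i ≠ j then ‖s i j‖ ^ 2 else 0 : ℝ) : ℂ) := by
    split_ifs <;> simp [Complex.conj_mul']
  simp only [insertionCoeff, hentry]
  simp [Complex.conj_mul']

lemma trace_conjTranspose_mul_errorFlip_mul_insertionCoeff (k : ι) :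
    ((insertionCoeff c s)ᴴ * errorFlip k * insertionCoeff c s).trace = 0 := by
  rw [trace_mul_comm, ← Matrix.mul_assoc]
  simp [errorFlip, mul_add, trace_add, trace_mul_single, mul_apply, insertionCoeff]

lemma trace_conjTranspose_mul_insertionCoeff_mul_errorFlip (k : ι) :
    ((insertionCoeff c s)ᴴ * insertionCoeff c s * errorFlip k).trace = 0 := by
  simp [errorFlip, mul_add, trace_add, trace_mul_single, mul_apply, insertionCoeff]

lemma trace_conjTranspose_mul_errorFlip_mul_insertionCoeff_mul_errorFlip (k : ι) :
    ((insertionCoeff c s)ᴴ * errorFlip k * insertionCoeff c s * errorFlip k).trace = 0 := by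
  simp [errorFlip, mul_add, add_mul, trace_add, trace_mul_single, mul_apply, insertionCoeff,
    single_apply, eq_comm]

lemma trace_insertionCoeff_errorFlip (k : ι) (α β γ δ : ℂ) :
    ((insertionCoeff c s)ᴴ * (α • 1 + β • errorFlip k) * insertionCoeff c s *
        (γ • 1 + δ • errorFlip k)).trace =
      α * γ * ((insertionCoeff c s)ᴴ * insertionCoeff c s).trace := by
  simp only [mul_add, add_mul, Matrix.mul_smul, Matrix.smul_mul, Matrix.mul_one, trace_add,
    trace_smul, trace_conjTranspose_mul_errorFlip_mul_insertionCoeff,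
    trace_conjTranspose_mul_insertionCoeff_mul_errorFlip,
    trace_conjTranspose_mul_errorFlip_mul_insertionCoeff_mul_errorFlip, smul_eq_mul, mul_zero,
    add_zero]
  ring

end InsertionCoeff

lemma star_vec_transpose_dotProduct_kronecker_mulVec {m n R : Type*} [Fintype m] [Fintype n]
    [CommRing R] [StarRing R] (A : Matrix m m R) (B : Matrix n n R) (X : Matrix m n R) :
    star (vec Xᵀ) ⬝ᵥ (A ⊗ₖ B) *ᵥ vec Xᵀ = (Xᴴ * A * X * Bᵀ).trace := by
  rw [kronecker_mulVec_vec, star_vec_dotProduct_vec, ← trace_transpose]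
  simp only [transpose_mul, transpose_transpose,
    ← conjTranspose_transpose_eq_transpose_conjTranspose]
  rw [trace_mul_comm]
  simp only [Matrix.mul_assoc]

section ImperfectTensor

variable {ι : Type*}

/-- The tensor product of two vectors; this is `vtens` for registers of five qubits. -/
def tensorVec {α : Type*} (v w : α → ℂ) : α × α → ℂ :=
  fun p ↦ v p.1 * w p.2

variable [Fintype ι] [DecidableEq ι]

/-- The superposition of two copies of the state `v` with all insertions of a Pauli `Z` error in
each copy on distinct legs. -/
def imperfectTensor (c : ℂ) (s : ι → ι → ℂ) (v : (ι → Fin 2) → ℂ) :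
    (ι → Fin 2) × (ι → Fin 2) → ℂ :=
  c • tensorVec v v + ∑ i, ∑ j,
    if i ≠ j then s i j • tensorVec (qubitOp i pZ *ᵥ v) (qubitOp j pZ *ᵥ v) else 0

lemma imperfectTensor_eq_vec (c : ℂ) (s : ι → ι → ℂ) (v : (ι → Fin 2) → ℂ) :
    imperfectTensor c s v =
      vec (errorFrame v * insertionCoeff c s * (errorFrame v)ᵀ)ᵀ := by
  have hframe (x : ι → Fin 2) (e : Option ι) :
      errorFrame v x e = v x * walsh (errorString e) x := by
    rw [errorFrame, diagonal_mul, errorSigns]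
  funext ⟨x, y⟩
  simp only [vec, transpose_apply, mul_apply, hframe, Fintype.sum_option, insertionCoeff,
    errorString, walsh_zero_left, imperfectTensor, Pi.add_apply, Pi.smul_apply, Finset.sum_apply,
    smul_eq_mul, tensorVec, mul_one, mul_zero, zero_add, add_zero, Finset.sum_const_zero,
    Finset.sum_mul]
  rw [Finset.sum_comm]
  refine congrArg₂ (· + ·) (by ring)
    (Finset.sum_congr rfl fun j _ ↦ Finset.sum_congr rfl fun i _ ↦ ?_)
  split_ifs
  · rw [Pi.smul_apply, tensorVec, qubitOp_pZ_mulVec_apply, qubitOp_pZ_mulVec_apply, smul_eq_mul]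
    ring
  · simp

variable {c : ℂ} {s : ι → ι → ℂ} {v : (ι → Fin 2) → ℂ}

lemma IsEvenFlat.imperfectTensor_qubitOp_kronecker (hv : IsEvenFlat v)
    (hι : 3 < Fintype.card ι) (k : ι) (A B : Matrix (Fin 2) (Fin 2) ℂ) :
    star (imperfectTensor c s v) ⬝ᵥ (qubitOp k A ⊗ₖ qubitOp k B) *ᵥ imperfectTensor c s v =
      A.trace / 2 * (B.trace / 2) * ((insertionCoeff c s)ᴴ * insertionCoeff c s).trace := by
  set V := errorFrame v
  set C := insertionCoeff c s
  calc star (imperfectTensor c s v) ⬝ᵥ (qubitOp k A ⊗ₖ qubitOp k B) *ᵥ imperfectTensor c s v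
      = ((V * C * Vᵀ)ᴴ * qubitOp k A * (V * C * Vᵀ) * (qubitOp k B)ᵀ).trace := by
        rw [imperfectTensor_eq_vec, star_vec_transpose_dotProduct_kronecker_mulVec]
    _ = (Cᴴ * (Vᴴ * qubitOp k A * V) * C * (Vᴴ * qubitOp k B * V)ᵀ).trace := by
        simp only [conjTranspose_mul, transpose_mul,
          conjTranspose_transpose_eq_transpose_conjTranspose, Matrix.mul_assoc]
        rw [trace_mul_comm]
        simp only [Matrix.mul_assoc]
    _ = A.trace / 2 * (B.trace / 2) * (Cᴴ * C).trace := by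
        rw [hv.compress_qubitOp hι, hv.compress_qubitOp hι, transpose_add, transpose_smul,
          transpose_smul, transpose_one, transpose_errorFlip, trace_insertionCoeff_errorFlip]

theorem stmt9_general (hι : 3 < Fintype.card ι) (hv : IsEvenFlat v)
    (hcoef : ‖c‖ ^ 2 + ∑ i, ∑ j, (if i ≠ j then ‖s i j‖ ^ 2 else 0) = 1) :
    star (imperfectTensor c s v) ⬝ᵥ imperfectTensor c s v = 1
    ∧ ∀ (k : ι) (M : Matrix (Fin 2 × Fin 2) (Fin 2 × Fin 2) ℂ),
        star (imperfectTensor c s v) ⬝ᵥ legInsertion k M *ᵥ imperfectTensor c s v =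
          M.trace / 4 := by
  have hleg (k : ι) (M : Matrix (Fin 2 × Fin 2) (Fin 2 × Fin 2) ℂ) :
      star (imperfectTensor c s v) ⬝ᵥ legInsertion k M *ᵥ imperfectTensor c s v =
        M.trace / 4 := by
    induction M using Matrix.induction_on' with
    | h_zero => simp [legInsertion_zero]
    | h_add M N hM hN =>
      rw [legInsertion_add, add_mulVec, dotProduct_add, hM, hN, trace_add, add_div]
    | h_std_basis a b z =>
      have hprod : single a b z = single a.1 b.1 z ⊗ₖ single a.2 b.2 1 := by
        rw [single_kronecker_single, mul_one]
      rw [hprod, legInsertion_kronecker, hv.imperfectTensor_qubitOp_kronecker hι,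
        trace_conjTranspose_mul_insertionCoeff, hcoef, trace_kronecker]
      push_cast
      ring
  obtain ⟨k⟩ : Nonempty ι := Fintype.card_pos_iff.1 (by lia)
  refine ⟨?_, hleg⟩
  simpa [legInsertion_one] using hleg k 1

end ImperfectTensor

lemma Zon_eq_qubitOp (i : Fin 5) : Zon i = qubitOp i pZ := rfl

lemma vtens_eq_tensorVec (v w : (Fin 5 → Fin 2) → ℂ) : vtens v w = tensorVec v w := rfl

lemma legIns_eq_legInsertion (k : Fin 5) (M : Matrix (Fin 2 × Fin 2) (Fin 2 × Fin 2) ℂ) :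
    legIns k M = legInsertion k M := by
  ext p q
  rw [legIns, legInsertion]
  congr

/-- the imperfect tensor
`Ψ = cos θ · v ⊗ v + Σ_{i≠j} s_{ij} · (Z_i v) ⊗ (Z_j v)` built from the logical-zero
state `v` of the five-qubit code, with `cos²θ + Σ_{i≠j} s_{ij}² = 1`, is a unit
vector whose reduced density matrix on each of its five dimension-4 legs is
maximally mixed: `⟨Ψ, M̃ Ψ⟩ = Tr(M)/4` for every insertion `M̃` of a `4×4` matrix
`M` on a leg. -/
theorem stmt9 (v : (Fin 5 → Fin 2) → ℂ) (hnorm : star v ⬝ᵥ v = 1)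
    (hstab : ∀ i : Fin 4, (gs i).mulVec v = v) (hZ : Zbar.mulVec v = v)
    (θ : ℝ) (s : Fin 5 → Fin 5 → ℝ)
    (hcoef : Real.cos θ ^ 2 + ∑ i, ∑ j, (if i ≠ j then s i j ^ 2 else 0) = 1)
    (Ψ : (Fin 5 → Fin 2) × (Fin 5 → Fin 2) → ℂ)
    (hΨ : Ψ = (Real.cos θ : ℂ) • vtens v v
      + ∑ i, ∑ j, if i ≠ j then
          ((s i j : ℂ) • vtens ((Zon i).mulVec v) ((Zon j).mulVec v))
        else 0) :
    star Ψ ⬝ᵥ Ψ = 1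
    ∧ ∀ (k : Fin 5) (M : Matrix (Fin 2 × Fin 2) (Fin 2 × Fin 2) ℂ),
        star Ψ ⬝ᵥ (legIns k M).mulVec Ψ = M.trace / 4 := by
  obtain rfl : Ψ = imperfectTensor (Real.cos θ : ℂ) (fun i j ↦ (s i j : ℂ)) v := by
    simp only [hΨ, imperfectTensor, vtens_eq_tensorVec, Zon_eq_qubitOp]
  simp only [legIns_eq_legInsertion]
  exact stmt9_general (by simp) (isEvenFlat_of_stabilized hnorm hstab hZ)
    (by simpa [-Complex.ofReal_cos] using hcoef)
end
end
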